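/- Let L ∈ (0,π), set δ² = (π² − L²)/(4L²), and let k > 0 satisfy k² < min(3/5, 4δ²/9); set χ = k(δ² + k⁴) and a = (3 − 5k²)/2. Let T > 0, D = (0,∞) × (0,L), and let u : [0,T] × ℝ² → ℝ be smooth, satisfy u_t + u_x + u u_x + u_{xxx} + u_{xyy} − u_{xxxxx} = 0 on [0,T] × D with boundary conditions u(t,0,y) = u_x(t,0,y) = 0 and u(t,x,0) = u(t,x,L) = 0, and suppose that e^{kx/2} times u and e^{kx/2} times each of its spatial partial derivatives up to order five is square-integrable over D uniformly in t and that these weighted quantities tend to 0 as x → ∞ uniformly. If the initial datum u₀ = u(0,·,·) satisfies ∫_D u₀² dxdy ≤ (9δ²/2) · min(1/8, a/2, δ²/4), then for all t ∈ [0,T], ∫_D u(t,x,y)² dxdy ≤ ∫_D e^{kx} u(t,x,y)² dxdy ≤ e^{−χ t} ∫_D e^{kx} u₀(x,y)² dxdy. -/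

import Mathlib

open MeasureTheory Real

/-- Partial derivative with respect to the first spatial coordinate. -/
noncomputable def pdx (u : ℝ × ℝ → ℝ) : ℝ × ℝ → ℝ :=
  fun p => deriv (fun x => u (x, p.2)) p.1

/-- Partial derivative with respect to the second spatial coordinate. -/
noncomputable def pdy (u : ℝ × ℝ → ℝ) : ℝ × ℝ → ℝ :=
  fun p => deriv (fun y => u (p.1, y)) p.2

/-- Mixed spatial partial derivative `∂_x^i ∂_y^j`. -/
noncomputable def pd (i j : ℕ) (u : ℝ × ℝ → ℝ) : ℝ × ℝ → ℝ :=
  pdx^[i] (pdy^[j] u)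

section helpers
open Set Filter Topology

abbrev Sm (w : ℝ × ℝ → ℝ) : Prop := ContDiff ℝ (⊤ : ℕ∞) w

lemma Sm.hx {w : ℝ × ℝ → ℝ} (h : Sm w) (x y : ℝ) :
    HasDerivAt (fun s => w (s, y)) (fderiv ℝ w (x, y) (1, 0)) x := by
  have h1 : HasFDerivAt w (fderiv ℝ w (x, y)) (x, y) :=
    (h.differentiable (by simp) (x, y)).hasFDerivAt
  have h2 : HasDerivAt (fun s : ℝ => (s, y)) ((1 : ℝ), (0 : ℝ)) x :=
    (hasDerivAt_id x).prodMk (hasDerivAt_const x y)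
  exact h1.comp_hasDerivAt x h2

lemma Sm.hy {w : ℝ × ℝ → ℝ} (h : Sm w) (x y : ℝ) :
    HasDerivAt (fun s => w (x, s)) (fderiv ℝ w (x, y) (0, 1)) y := by
  have h1 : HasFDerivAt w (fderiv ℝ w (x, y)) (x, y) :=
    (h.differentiable (by simp) (x, y)).hasFDerivAt
  have h2 : HasDerivAt (fun s : ℝ => (x, s)) ((0 : ℝ), (1 : ℝ)) y :=
    (hasDerivAt_const y x).prodMk (hasDerivAt_id y)
  exact h1.comp_hasDerivAt y h2

lemma pdx_eq {w : ℝ × ℝ → ℝ} (h : Sm w) : pdx w = fun p => fderiv ℝ w p (1, 0) := by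
  funext p; exact (h.hx p.1 p.2).deriv

lemma pdy_eq {w : ℝ × ℝ → ℝ} (h : Sm w) : pdy w = fun p => fderiv ℝ w p (0, 1) := by
  funext p; exact (h.hy p.1 p.2).deriv

lemma Sm.pdx {w : ℝ × ℝ → ℝ} (h : Sm w) : Sm (pdx w) := by
  rw [pdx_eq h]
  exact (h.fderiv_right (m := (⊤ : ℕ∞)) (by simp)).clm_apply contDiff_const

lemma Sm.pdy {w : ℝ × ℝ → ℝ} (h : Sm w) : Sm (pdy w) := by
  rw [pdy_eq h]
  exact (h.fderiv_right (m := (⊤ : ℕ∞)) (by simp)).clm_apply contDiff_const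

lemma Sm.dx {w : ℝ × ℝ → ℝ} (h : Sm w) (x y : ℝ) :
    HasDerivAt (fun s => w (s, y)) (_root_.pdx w (x, y)) x := by
  rw [pdx_eq h]; exact h.hx x y

lemma Sm.dy {w : ℝ × ℝ → ℝ} (h : Sm w) (x y : ℝ) :
    HasDerivAt (fun s => w (x, s)) (_root_.pdy w (x, y)) y := by
  rw [pdy_eq h]; exact h.hy x y

lemma Sm.comm {w : ℝ × ℝ → ℝ} (h : Sm w) : _root_.pdx (_root_.pdy w) = _root_.pdy (_root_.pdx w) := by
  have hd : Differentiable ℝ (fderiv ℝ w) :=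
    (h.fderiv_right (m := (⊤ : ℕ∞)) (by simp)).differentiable (by simp)
  rw [pdx_eq h.pdy, pdy_eq h.pdx, pdx_eq h, pdy_eq h]
  funext p
  have hs : IsSymmSndFDerivAt ℝ w p := (contDiff_infty.1 h 2).contDiffAt.isSymmSndFDerivAt (by simp)
  have e := hs (1, 0) (0, 1)
  rw [fderiv_clm_apply (hd p) (by fun_prop), fderiv_clm_apply (hd p) (by fun_prop)]
  simpa using e

lemma pd_zero (w : ℝ × ℝ → ℝ) : pd 0 0 w = w := rfl
lemma pd_succ (i j : ℕ) (w : ℝ × ℝ → ℝ) : pd (i + 1) j w = pdx (pd i j w) :=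
  Function.iterate_succ_apply' _ _ _

def box (R L : ℝ) : Set (ℝ × ℝ) := Ioc 0 R ×ˢ Ioo 0 L

lemma box_meas (R L : ℝ) : MeasurableSet (box R L) := measurableSet_Ioc.prod measurableSet_Ioo

lemma box_int {f : ℝ × ℝ → ℝ} (hf : Continuous f) (R L : ℝ) : IntegrableOn f (box R L) := by
  refine (hf.continuousOn.integrableOn_compact
    (isCompact_Icc.prod isCompact_Icc : IsCompact (Icc (0:ℝ) R ×ˢ Icc (0:ℝ) L))).mono_set ?_
  exact prod_mono Ioc_subset_Icc_self Ioo_subset_Icc_self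

lemma box_fub1 {f : ℝ × ℝ → ℝ} (hf : Continuous f) (R L : ℝ) :
    ∫ p in box R L, f p = ∫ x in Ioc 0 R, ∫ y in Ioo 0 L, f (x, y) :=
  setIntegral_prod f (box_int hf R L)

lemma box_int' {f : ℝ × ℝ → ℝ} (hf : Continuous f) (R L : ℝ) :
    Integrable f ((volume.restrict (Ioc 0 R)).prod (volume.restrict (Ioo 0 L))) := by
  rw [Measure.prod_restrict]; exact box_int hf R L

lemma box_fub2 {f : ℝ × ℝ → ℝ} (hf : Continuous f) (R L : ℝ) :
    ∫ p in box R L, f p = ∫ y in Ioo 0 L, ∫ x in Ioc 0 R, f (x, y) := by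
  rw [← integral_prod_symm f (box_int' hf R L), Measure.prod_restrict]; rfl

lemma ftc_Ioc {f f' : ℝ → ℝ} {a b : ℝ} (hab : a ≤ b) (h : ∀ x, HasDerivAt f (f' x) x)
    (hc : Continuous f') : ∫ x in Ioc a b, f' x = f b - f a := by
  rw [← intervalIntegral.integral_of_le hab]
  exact intervalIntegral.integral_eq_sub_of_hasDerivAt (fun x _ => h x) (hc.intervalIntegrable _ _)

lemma ftc_Ioo {f f' : ℝ → ℝ} {a b : ℝ} (hab : a ≤ b) (h : ∀ x, HasDerivAt f (f' x) x)
    (hc : Continuous f') : ∫ x in Ioo a b, f' x = f b - f a := by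
  rw [← integral_Ioc_eq_integral_Ioo]; exact ftc_Ioc hab h hc

lemma int_pdx {P : ℝ × ℝ → ℝ} (hP : Sm P) {R L : ℝ} (hR : 0 ≤ R) :
    ∫ p in box R L, pdx P p = ∫ y in Ioo 0 L, (P (R, y) - P (0, y)) := by
  have hc := hP.pdx.continuous
  rw [box_fub2 hc]
  refine setIntegral_congr_fun measurableSet_Ioo fun y _ => ?_
  exact ftc_Ioc hR (fun x => hP.dx x y) (by fun_prop)

lemma int_pdy {P : ℝ × ℝ → ℝ} (hP : Sm P) {R L : ℝ} (hL : 0 ≤ L) :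
    ∫ p in box R L, pdy P p = ∫ x in Ioc 0 R, (P (x, L) - P (x, 0)) := by
  have hc := hP.pdy.continuous
  rw [box_fub1 hc]
  refine setIntegral_congr_fun measurableSet_Ioc fun x _ => ?_
  exact ftc_Ioo hL (fun y => hP.dy x y) (by fun_prop)

lemma ftc_bound_Ioc {f f' H : ℝ → ℝ} {R x : ℝ} (hx : x ∈ Ioc 0 R) (h : ∀ x, HasDerivAt f (f' x) x)
    (hc : Continuous f') (hH : Continuous H) (hle : ∀ x, f' x ≤ H x) (h0 : ∀ x, 0 ≤ H x) :
    f x ≤ f 0 + ∫ s in Ioc 0 R, H s := by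
  have e := ftc_Ioc hx.1.le h hc
  have i1 : IntegrableOn f' (Ioc 0 x) := hc.integrableOn_Ioc
  have i2 : IntegrableOn H (Ioc 0 x) := hH.integrableOn_Ioc
  have i3 : IntegrableOn H (Ioc 0 R) := hH.integrableOn_Ioc
  have a1 : ∫ s in Ioc 0 x, f' s ≤ ∫ s in Ioc 0 x, H s := integral_mono i1 i2 hle
  have a2 : ∫ s in Ioc 0 x, H s ≤ ∫ s in Ioc 0 R, H s :=
    setIntegral_mono_set i3 (ae_of_all _ h0) (Ioc_subset_Ioc_right hx.2).eventuallyLE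
  linarith

/-- Cauchy-Schwarz for continuous functions on the box. -/
lemma box_CS {f g : ℝ × ℝ → ℝ} (hf : Continuous f) (hg : Continuous g) (R L : ℝ) :
    (∫ p in box R L, f p * g p) ^ 2 ≤
      (∫ p in box R L, f p ^ 2) * ∫ p in box R L, g p ^ 2 := by
  have key : ∀ s : ℝ, 0 ≤ (∫ p in box R L, g p ^ 2) * (s * s) +
      (2 * ∫ p in box R L, f p * g p) * s + ∫ p in box R L, f p ^ 2 := by
    intro s
    have : ∫ p in box R L, (f p + s * g p) ^ 2 = (∫ p in box R L, g p ^ 2) * (s * s) +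
      (2 * ∫ p in box R L, f p * g p) * s + ∫ p in box R L, f p ^ 2 := by
      have e : ∀ p, (f p + s * g p) ^ 2 = (s * s) * g p ^ 2 + (2 * s) * (f p * g p) + f p ^ 2 := by
        intro p; ring
      simp_rw [e]
      rw [integral_add, integral_add, integral_const_mul, integral_const_mul]
      · ring
      all_goals exact box_int (by fun_prop) R L
    rw [← this]
    exact integral_nonneg fun p => sq_nonneg _
  have := discrim_le_zero key
  unfold discrim at this
  nlinarith

/-- One-dimensional Steklov inequality. -/
lemma steklov {f f' : ℝ → ℝ} {L : ℝ} (hL : 0 < L) (h : ∀ x, HasDerivAt f (f' x) x)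
    (hc : Continuous f') (h0 : f 0 = 0) (h1 : f L = 0) :
    (π ^ 2 / L ^ 2) * ∫ y in Ioo 0 L, f y ^ 2 ≤ ∫ y in Ioo 0 L, f' y ^ 2 := by
  have hfc : Continuous f := continuous_iff_continuousAt.2 fun x => (h x).continuousAt
  have key : ∀ μ ∈ Ioo 0 (π / L), μ ^ 2 * ∫ y in Ioo 0 L, f y ^ 2 ≤ ∫ y in Ioo 0 L, f' y ^ 2 := by
    rintro μ ⟨hμ0, hμ⟩
    have hμL : μ * L < π := by rwa [lt_div_iff₀ hL] at hμ
    have hcos : ∀ y ∈ Icc 0 L, 0 < cos (μ * (y - L / 2)) := by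
      intro y hy
      apply cos_pos_of_mem_Ioo
      constructor <;> nlinarith [hy.1, hy.2]
    -- derivative of tan * f^2
    have hd : ∀ y ∈ uIcc 0 L, HasDerivAt
        (fun y => μ * tan (μ * (y - L / 2)) * f y ^ 2)
        (μ * (1 / cos (μ * (y - L / 2)) ^ 2 * μ) * f y ^ 2 +
          μ * tan (μ * (y - L / 2)) * (2 * f y * f' y)) y := by
      intro y hy
      rw [uIcc_of_le hL.le] at hy
      have hlin : HasDerivAt (fun y => μ * (y - L / 2)) μ y := by
        simpa using ((hasDerivAt_id y).sub_const (L / 2)).const_mul μ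
      have ht := (hasDerivAt_tan (hcos y hy).ne').comp y hlin
      have hq : HasDerivAt (fun y => f y ^ 2) (2 * f y * f' y) y := by
        simpa using (h y).fun_pow 2
      exact (ht.const_mul μ).mul hq
    have hcc : ContinuousOn (fun y => μ * (1 / cos (μ * (y - L / 2)) ^ 2 * μ) * f y ^ 2 +
          μ * tan (μ * (y - L / 2)) * (2 * f y * f' y)) (Icc 0 L) := by
      have ct : ContinuousOn (fun y => tan (μ * (y - L / 2))) (Icc 0 L) := by
        simp_rw [tan_eq_sin_div_cos]
        exact ContinuousOn.div (by fun_prop) (by fun_prop) fun y hy => (hcos y hy).ne'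
      have cc : ContinuousOn (fun y => 1 / cos (μ * (y - L / 2)) ^ 2) (Icc 0 L) :=
        ContinuousOn.div (by fun_prop) (by fun_prop) fun y hy => (pow_pos (hcos y hy) 2).ne'
      fun_prop
    have hi : IntegrableOn (fun y => μ * (1 / cos (μ * (y - L / 2)) ^ 2 * μ) * f y ^ 2 +
          μ * tan (μ * (y - L / 2)) * (2 * f y * f' y)) (Ioo 0 L) :=
      (hcc.integrableOn_compact isCompact_Icc).mono_set Ioo_subset_Icc_self
    have e : ∫ y in Ioo 0 L, (μ * (1 / cos (μ * (y - L / 2)) ^ 2 * μ) * f y ^ 2 +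
          μ * tan (μ * (y - L / 2)) * (2 * f y * f' y)) = 0 := by
      rw [← integral_Ioc_eq_integral_Ioo, ← intervalIntegral.integral_of_le hL.le,
        intervalIntegral.integral_eq_sub_of_hasDerivAt hd]
      · simp [h0, h1]
      · rw [intervalIntegrable_iff_integrableOn_Ioo_of_le hL.le]; exact hi
    have i1 : IntegrableOn (fun y => f y ^ 2) (Ioo 0 L) :=
      ((hfc.pow 2).integrableOn_Icc).mono_set Ioo_subset_Icc_self
    have i2 : IntegrableOn (fun y => f' y ^ 2) (Ioo 0 L) :=
      ((hc.pow 2).integrableOn_Icc).mono_set Ioo_subset_Icc_self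
    have : ∫ y in Ioo 0 L, μ ^ 2 * f y ^ 2 ≤ ∫ y in Ioo 0 L, (f' y ^ 2 +
        (μ * (1 / cos (μ * (y - L / 2)) ^ 2 * μ) * f y ^ 2 +
          μ * tan (μ * (y - L / 2)) * (2 * f y * f' y))) := by
      refine setIntegral_mono_on (i1.const_mul _) (i2.add hi) measurableSet_Ioo fun y hy => ?_
      have hcy := hcos y (Ioo_subset_Icc_self hy)
      have e1 : 1 / cos (μ * (y - L / 2)) ^ 2 = 1 + tan (μ * (y - L / 2)) ^ 2 := by
        generalize μ * (y - L / 2) = c at hcy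
        rw [tan_eq_sin_div_cos]
        have := hcy.ne'
        field_simp
        linarith [sin_sq_add_cos_sq c]
      rw [e1]
      nlinarith [sq_nonneg (f' y + μ * tan (μ * (y - L / 2)) * f y)]
    rw [integral_add i2 hi, e, integral_const_mul] at this
    linarith
  have hlim : Tendsto (fun μ : ℝ => μ ^ 2 * ∫ y in Ioo 0 L, f y ^ 2) (𝓝[<] (π / L))
      (𝓝 ((π / L) ^ 2 * ∫ y in Ioo 0 L, f y ^ 2)) := by
    apply Tendsto.mono_left _ nhdsWithin_le_nhds
    exact Continuous.tendsto (by fun_prop) _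
  rw [← div_pow]
  refine le_of_tendsto hlim ?_
  filter_upwards [Ioo_mem_nhdsLT (show 0 < π / L by positivity)] with μ hμ using key μ hμ

lemma swap_xyy {w : ℝ × ℝ → ℝ} (h : Sm w) : pd 1 2 w = pdy (pdx (pdy w)) :=
  (h.pdy).comm

/-- The flux in the `x` direction. -/
noncomputable def flux (κ : ℝ) (w : ℝ × ℝ → ℝ) (p : ℝ × ℝ) : ℝ :=
  exp (κ * p.1) * (- w p ^ 2 - 2 / 3 * w p ^ 3
    + (-2 * w p * pd 2 0 w p + 2 * κ * w p * pd 1 0 w p + pd 1 0 w p ^ 2 - κ ^ 2 * w p ^ 2)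
    + pdy w p ^ 2
    + (2 * w p * pd 4 0 w p - 2 * (κ * w p + pd 1 0 w p) * pd 3 0 w p + pd 2 0 w p ^ 2
      + 4 * κ * pd 1 0 w p * pd 2 0 w p - 3 * κ ^ 2 * pd 1 0 w p ^ 2
      + 2 * κ ^ 2 * w p * pd 2 0 w p - 2 * κ ^ 3 * w p * pd 1 0 w p + κ ^ 4 * w p ^ 2))

lemma Sm.pdn {w : ℝ × ℝ → ℝ} (h : Sm w) : ∀ i, Sm (pd i 0 w)
  | 0 => h
  | i + 1 => by rw [pd_succ]; exact (Sm.pdn h i).pdx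

lemma flux_sm {κ : ℝ} {w : ℝ × ℝ → ℝ} (h : Sm w) : Sm (flux κ w) := by
  have h1 := h.pdn 1
  have h2 := h.pdn 2
  have h3 := h.pdn 3
  have h4 := h.pdn 4
  have h5 := h.pdy
  unfold flux
  unfold Sm at *
  fun_prop

lemma flux_dx {κ : ℝ} {w : ℝ × ℝ → ℝ} (h : Sm w) (x y : ℝ) :
    pdx (flux κ w) (x, y) + exp (κ * x) * ((κ + κ ^ 3 - κ ^ 5) * w (x, y) ^ 2
      + 2 * κ / 3 * w (x, y) ^ 3 - (3 * κ - 5 * κ ^ 3) * pd 1 0 w (x, y) ^ 2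
      - κ * pdy w (x, y) ^ 2 - 5 * κ * pd 2 0 w (x, y) ^ 2)
    = 2 * exp (κ * x) * w (x, y) * (- pdx w (x, y) - w (x, y) * pdx w (x, y) - pd 3 0 w (x, y)
        + pd 5 0 w (x, y)) + 2 * exp (κ * x) * pdy w (x, y) * pdx (pdy w) (x, y) := by
  have d0 := h.dx x y
  have d1 := (h.pdn 1).dx x y
  have d2 := (h.pdn 2).dx x y
  have d3 := (h.pdn 3).dx x y
  have d4 := (h.pdn 4).dx x y
  have dyy := h.pdy.dx x y
  rw [← pd_succ] at d1 d2 d3 d4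
  have e0 : pdx w = pd 1 0 w := rfl
  rw [e0] at d0 ⊢
  have de : HasDerivAt (fun s => exp (κ * s)) (exp (κ * x) * κ) x := by
    simpa using ((hasDerivAt_id x).const_mul κ).exp
  have D := de.fun_mul (((((d0.fun_pow 2).fun_neg).fun_sub ((d0.fun_pow 3).const_mul (2/3))).fun_add
    ((((((d0.const_mul (-2)).fun_mul d2).fun_add ((d0.const_mul (2 * κ)).fun_mul d1)).fun_add
      (d1.fun_pow 2))).fun_sub ((d0.fun_pow 2).const_mul (κ ^ 2)))).fun_add (dyy.fun_pow 2) |>.fun_add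
    (((((((((d0.const_mul 2).fun_mul d4).fun_sub
      ((((d0.const_mul κ).fun_add d1).const_mul 2).fun_mul d3)).fun_add (d2.fun_pow 2)).fun_add
      ((d1.const_mul (4 * κ)).fun_mul d2)).fun_sub ((d1.fun_pow 2).const_mul (3 * κ ^ 2))).fun_add
      ((d0.const_mul (2 * κ ^ 2)).fun_mul d2)).fun_sub
      ((d0.const_mul (2 * κ ^ 3)).fun_mul d1)).fun_add ((d0.fun_pow 2).const_mul (κ ^ 4))))
  have e : pdx (flux κ w) (x, y) = _ := D.deriv
  rw [e]
  simp only [Nat.reduceAdd, Nat.cast_ofNat, Nat.reduceSub, pow_one]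
  ring

/-- Energy inequality on the truncated domain. -/
lemma energy {κ R L ε : ℝ} {w ut : ℝ × ℝ → ℝ} (h : Sm w) (hR : 0 < R) (hL : 0 < L)
    (heq : ∀ p ∈ box R L, ut p + pdx w p + w p * pdx w p + pd 3 0 w p + pd 1 2 w p - pd 5 0 w p = 0)
    (hb1 : ∀ y ∈ Ioo 0 L, w (0, y) = 0 ∧ pdx w (0, y) = 0)
    (hb2 : ∀ x > 0, w (x, 0) = 0 ∧ w (x, L) = 0)
    (hε : ∀ y, flux κ w (R, y) ≤ ε) :
    ∫ p in box R L, 2 * exp (κ * p.1) * w p * ut p ≤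
      (∫ p in box R L, exp (κ * p.1) * ((κ + κ ^ 3 - κ ^ 5) * w p ^ 2
      + 2 * κ / 3 * w p ^ 3 - (3 * κ - 5 * κ ^ 3) * pd 1 0 w p ^ 2
      - κ * pdy w p ^ 2 - 5 * κ * pd 2 0 w p ^ 2)) + L * ε := by
  set Q : ℝ × ℝ → ℝ := fun p => -(2 * exp (κ * p.1) * w p * pdx (pdy w) p) with hQ
  have s1 := h.pdn 1
  have s2 := h.pdn 2
  have sy := h.pdy
  have sxy := h.pdy.pdx
  have hQs : Sm Q := by
    unfold Sm at *
    fun_prop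
  have hFs : Sm (flux κ w) := flux_sm h
  have c0 := h.continuous
  have c1 := s1.continuous
  have c2 := s2.continuous
  have cy := sy.continuous
  have cF := hFs.pdx.continuous
  have cQ := hQs.pdy.continuous
  have hQy : ∀ x y, pdy Q (x, y) = -(2 * exp (κ * x) * pdy w (x, y) * pdx (pdy w) (x, y)
      + 2 * exp (κ * x) * w (x, y) * pd 1 2 w (x, y)) := by
    intro x y
    have D := (((h.dy x y).const_mul (2 * exp (κ * x))).fun_mul (sxy.dy x y)).fun_neg
    rw [← swap_xyy h] at D
    exact D.deriv
  have e1 : ∫ p in box R L, 2 * exp (κ * p.1) * w p * ut p = ∫ p in box R L,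
      (exp (κ * p.1) * ((κ + κ ^ 3 - κ ^ 5) * w p ^ 2
      + 2 * κ / 3 * w p ^ 3 - (3 * κ - 5 * κ ^ 3) * pd 1 0 w p ^ 2
      - κ * pdy w p ^ 2 - 5 * κ * pd 2 0 w p ^ 2) + pdx (flux κ w) p + pdy Q p) := by
    refine setIntegral_congr_fun (box_meas R L) ?_
    rintro ⟨x, y⟩ hp
    have a1 := heq _ hp
    have a2 := flux_dx (κ := κ) h x y
    have a3 := hQy x y
    simp only
    rw [a3]
    have : ut (x, y) = -(pdx w (x, y) + w (x, y) * pdx w (x, y) + pd 3 0 w (x, y)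
      + pd 1 2 w (x, y) - pd 5 0 w (x, y)) := by linarith
    rw [this]
    linarith
  rw [e1, integral_add, integral_add, int_pdx hFs hR.le, int_pdy hQs hL.le]
  · have q0 : ∫ x in Ioc 0 R, (Q (x, L) - Q (x, 0)) = 0 := by
      apply setIntegral_eq_zero_of_forall_eq_zero
      intro x hx
      have := hb2 x hx.1
      simp [hQ, this.1, this.2]
    have f0 : ∫ y in Ioo 0 L, (flux κ w (R, y) - flux κ w (0, y)) ≤ ∫ y in Ioo 0 L, ε := by
      have cf := hFs.continuous
      refine setIntegral_mono_on ?_ (by simp) measurableSet_Ioo ?_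
      · exact (Continuous.integrableOn_Icc (by fun_prop)).mono_set Ioo_subset_Icc_self
      · intro y hy
        have hy0 : pdy w (0, y) = 0 := by
          have : (fun s => w (0, s)) =ᶠ[𝓝 y] fun _ => 0 := by
            filter_upwards [isOpen_Ioo.mem_nhds hy] with s hs using (hb1 s hs).1
          have := this.deriv_eq
          simpa [pdy] using this
        have hf : flux κ w (0, y) = pd 2 0 w (0, y) ^ 2 := by
          have e0 : pd 1 0 w (0, y) = 0 := (hb1 y hy).2
          unfold flux
          simp [e0, (hb1 y hy).1, hy0]
        have := hε y
        nlinarith [sq_nonneg (pd 2 0 w (0, y))]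
    have : ∫ y in Ioo 0 L, ε = L * ε := by
      simp [hL.le]
    linarith
  all_goals exact box_int (by fun_prop) R L

lemma lady {κ R L : ℝ} {w : ℝ × ℝ → ℝ} (h : Sm w) (hκ : 0 ≤ κ)
    (hb1 : ∀ y ∈ Ioo 0 L, w (0, y) = 0) (hb2 : ∀ x > 0, w (x, 0) = 0) :
    ∫ p in box R L, (exp (κ * p.1) * w p ^ 2) ^ 2 ≤
      (∫ p in box R L, exp (κ * p.1) * (κ * w p ^ 2 + 2 * (|w p| * |pd 1 0 w p|))) *
      ∫ p in box R L, exp (κ * p.1) * (2 * (|w p| * |pdy w p|)) := by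
  have c0 := h.continuous
  have c1 := (h.pdn 1).continuous
  have cy := h.pdy.continuous
  set H1 : ℝ × ℝ → ℝ := fun p => exp (κ * p.1) * (κ * w p ^ 2 + 2 * (|w p| * |pd 1 0 w p|)) with hH1
  set H2 : ℝ × ℝ → ℝ := fun p => exp (κ * p.1) * (2 * (|w p| * |pdy w p|)) with hH2
  have k1 : Continuous H1 := by fun_prop
  have k2 : Continuous H2 := by fun_prop
  have n1 : ∀ p, 0 ≤ H1 p := fun p => by positivity
  have n2 : ∀ p, 0 ≤ H2 p := fun p => by positivity
  set f : ℝ → ℝ := fun y => ∫ x in Ioc 0 R, H1 (x, y) with hf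
  set g : ℝ → ℝ := fun x => ∫ y in Ioo 0 L, H2 (x, y) with hg
  have if1 : Integrable f (volume.restrict (Ioo 0 L)) := (box_int' k1 R L).integral_prod_right
  have ig1 : Integrable g (volume.restrict (Ioc 0 R)) := (box_int' k2 R L).integral_prod_left
  rw [box_fub2 k1, box_fub1 k2, mul_comm]
  have e : ∫ p in box R L, g p.1 * f p.2 = (∫ x in Ioc 0 R, g x) * ∫ y in Ioo 0 L, f y :=
    setIntegral_prod_mul g f (Ioc 0 R) (Ioo 0 L)
  have ip : IntegrableOn (fun p : ℝ × ℝ => g p.1 * f p.2) (box R L) := by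
    have := ig1.mul_prod if1
    rw [Measure.prod_restrict] at this
    exact this
  change _ ≤ (∫ x in Ioc 0 R, g x) * ∫ y in Ioo 0 L, f y
  rw [← e]
  refine setIntegral_mono_on (box_int (by fun_prop) R L) ip (box_meas R L) ?_
  rintro ⟨x, y⟩ ⟨hx, hy⟩
  simp only at hx hy ⊢
  have b1 : exp (κ * x) * w (x, y) ^ 2 ≤ f y := by
    have D : ∀ s, HasDerivAt (fun s => exp (κ * s) * w (s, y) ^ 2)
        (exp (κ * s) * κ * w (s, y) ^ 2 + exp (κ * s) * (2 * w (s, y) * pd 1 0 w (s, y))) s := by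
      intro s
      have de : HasDerivAt (fun s => exp (κ * s)) (exp (κ * s) * κ) s := by
        simpa using ((hasDerivAt_id s).const_mul κ).exp
      have := de.fun_mul ((h.dx s y).fun_pow 2)
      have e0 : pd 1 0 w = pdx w := rfl
      rw [e0]
      simpa using this
    have := ftc_bound_Ioc (H := fun s => H1 (s, y)) hx D (by fun_prop) (by fun_prop) ?_
      (fun s => n1 _)
    · simpa [hb1 y hy] using this
    · intro s
      have a1 : w (s, y) * pd 1 0 w (s, y) ≤ |w (s, y)| * |pd 1 0 w (s, y)| := by
        rw [← abs_mul]; exact le_abs_self _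
      have := exp_pos (κ * s)
      simp only [hH1]
      nlinarith
  have b2 : exp (κ * x) * w (x, y) ^ 2 ≤ g x := by
    have D : ∀ s, HasDerivAt (fun s => exp (κ * x) * w (x, s) ^ 2)
        (exp (κ * x) * (2 * w (x, s) * pdy w (x, s))) s := by
      intro s
      have := ((h.dy x s).fun_pow 2).const_mul (exp (κ * x))
      simpa using this
    have := ftc_bound_Ioc (H := fun s => H2 (x, s)) (R := L) ⟨hy.1, hy.2.le⟩ D (by fun_prop)
      (by fun_prop) ?_ (fun s => n2 _)
    · simpa [hb2 x hx.1, hg, integral_Ioc_eq_integral_Ioo] using this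
    · intro s
      have a1 : w (x, s) * pdy w (x, s) ≤ |w (x, s)| * |pdy w (x, s)| := by
        rw [← abs_mul]; exact le_abs_self _
      have := exp_pos (κ * x)
      simp only [hH2]
      nlinarith
  have p0 : 0 ≤ exp (κ * x) * w (x, y) ^ 2 := by positivity
  rw [sq]
  exact mul_le_mul b2 b1 p0 (p0.trans b2)

lemma algebra_step {k d a m E A B M X C h1 h2 : ℝ}
    (hE : 0 ≤ E) (hA : 0 ≤ A) (hB : 0 ≤ B)
    (hX : 0 ≤ X) (hC : C ^ 2 ≤ M * X) (hXh : X ≤ h1 * h2)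
    (hh1 : h1 ^ 2 ≤ E * (2 * k ^ 2 * E + 8 * A)) (hh2 : h2 ^ 2 ≤ E * (4 * B))
    (hs : (1 + 4 * d) * E ≤ B) (hM : M ≤ 9 * d / 2 * m) (m0 : 0 ≤ m) (m1 : m ≤ 1 / 8)
    (m2 : m ≤ a / 2) (m3 : m ≤ d / 4) (hk : k ^ 2 ≤ 4 * d / 9) (ha : 2 * a = 3 - 5 * k ^ 2) :
    (1 + k ^ 2 - k ^ 4) * E + 2 / 3 * C - (3 - 5 * k ^ 2) * A - B ≤ -(d + k ^ 4) * E := by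
  have hd : 0 ≤ d := by linarith
  have hY : X ≤ E * (k ^ 2 * E + 4 * A + 2 * B) := by
    refine hXh.trans (le_of_abs_le (abs_le_of_sq_le_sq ?_ (by positivity)))
    calc (h1 * h2) ^ 2 = h1 ^ 2 * h2 ^ 2 := by ring
      _ ≤ (E * (2 * k ^ 2 * E + 8 * A)) * (E * (4 * B)) := by gcongr
      _ ≤ (E * (k ^ 2 * E + 4 * A + 2 * B)) ^ 2 := by
        nlinarith [mul_nonneg (sq_nonneg E) (sq_nonneg (k ^ 2 * E + 4 * A - 2 * B))]
  have hN : 2 / 3 * C ≤ d * E + m * (k ^ 2 / 2 * E + 2 * A + B) := by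
    refine le_of_abs_le (abs_le_of_sq_le_sq ?_ (by positivity))
    have : C ^ 2 ≤ 9 * d / 2 * m * (E * (k ^ 2 * E + 4 * A + 2 * B)) :=
      hC.trans (mul_le_mul hM hY hX (by positivity))
    nlinarith [sq_nonneg (d * E - m * (k ^ 2 / 2 * E + 2 * A + B))]
  have t1 : m * A ≤ a / 2 * A := mul_le_mul_of_nonneg_right m2 hA
  have t2 : m * (k ^ 2 * E) ≤ 1 / 8 * (4 * d / 9 * E) := by gcongr
  have t3 : (1 - m) * ((1 + 4 * d) * E) ≤ (1 - m) * B := mul_le_mul_of_nonneg_left hs (by linarith)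
  have t4 : m * E ≤ d / 4 * E := by gcongr
  have t5 : m * (d * E) ≤ 1 / 8 * (d * E) := by gcongr
  have t6 : k ^ 2 * E ≤ 4 * d / 9 * E := by gcongr
  have t7 : 0 ≤ d * E := by positivity
  have t8 : 0 ≤ a * A := mul_nonneg (by linarith) hA
  rw [← ha]
  nlinarith

lemma diffineq {k R L d a m : ℝ} {w : ℝ × ℝ → ℝ} (h : Sm w) (hL : 0 < L) (hk0 : 0 < k)
    (hb1 : ∀ y ∈ Ioo 0 L, w (0, y) = 0)
    (hb2 : ∀ x > 0, w (x, 0) = 0 ∧ w (x, L) = 0)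
    (hd : 1 + 4 * d = π ^ 2 / L ^ 2)
    (hM : ∫ p in box R L, w p ^ 2 ≤ 9 * d / 2 * m) (m0 : 0 ≤ m) (m1 : m ≤ 1 / 8)
    (m2 : m ≤ a / 2) (m3 : m ≤ d / 4) (hk : k ^ 2 ≤ 4 * d / 9) (ha : 2 * a = 3 - 5 * k ^ 2) :
    (∫ p in box R L, exp (k * p.1) * ((k + k ^ 3 - k ^ 5) * w p ^ 2
      + 2 * k / 3 * w p ^ 3 - (3 * k - 5 * k ^ 3) * pd 1 0 w p ^ 2
      - k * pdy w p ^ 2 - 5 * k * pd 2 0 w p ^ 2)) ≤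
    -(k * (d + k ^ 4)) * ∫ p in box R L, exp (k * p.1) * w p ^ 2 := by
  have c0 := h.continuous
  have c1 := (h.pdn 1).continuous
  have c2 := (h.pdn 2).continuous
  have cy := h.pdy.continuous
  have hexp : ∀ x : ℝ, exp (k * x / 2) * exp (k * x / 2) = exp (k * x) := by
    intro x; rw [← exp_add]; ring_nf
  have hsplit : (∫ p in box R L, exp (k * p.1) * ((k + k ^ 3 - k ^ 5) * w p ^ 2
      + 2 * k / 3 * w p ^ 3 - (3 * k - 5 * k ^ 3) * pd 1 0 w p ^ 2
      - k * pdy w p ^ 2 - 5 * k * pd 2 0 w p ^ 2)) =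
      k * ((1 + k ^ 2 - k ^ 4) * (∫ p in box R L, exp (k * p.1) * w p ^ 2) +
        2 / 3 * (∫ p in box R L, w p * (exp (k * p.1) * w p ^ 2)) -
        (3 - 5 * k ^ 2) * (∫ p in box R L, exp (k * p.1) * pd 1 0 w p ^ 2) -
        (∫ p in box R L, exp (k * p.1) * pdy w p ^ 2)) -
        5 * k * (∫ p in box R L, exp (k * p.1) * pd 2 0 w p ^ 2) := by
    simp_rw [← integral_const_mul]
    rw [← integral_add, ← integral_sub, ← integral_sub, ← integral_const_mul, ← integral_sub]
    · congr 1; funext p; ring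
    all_goals exact box_int (by fun_prop) R L
  rw [hsplit]
  have hF : 0 ≤ ∫ p in box R L, exp (k * p.1) * pd 2 0 w p ^ 2 :=
    integral_nonneg fun p => by positivity
  have key := algebra_step (k := k) (d := d) (a := a) (m := m)
    (E := ∫ p in box R L, exp (k * p.1) * w p ^ 2)
    (A := ∫ p in box R L, exp (k * p.1) * pd 1 0 w p ^ 2)
    (B := ∫ p in box R L, exp (k * p.1) * pdy w p ^ 2)
    (M := ∫ p in box R L, w p ^ 2)
    (X := ∫ p in box R L, (exp (k * p.1) * w p ^ 2) ^ 2)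
    (C := ∫ p in box R L, w p * (exp (k * p.1) * w p ^ 2))
    (h1 := ∫ p in box R L, exp (k * p.1) * (k * w p ^ 2 + 2 * (|w p| * |pd 1 0 w p|)))
    (h2 := ∫ p in box R L, exp (k * p.1) * (2 * (|w p| * |pdy w p|)))
    (integral_nonneg fun p => by positivity) (integral_nonneg fun p => by positivity)
    (integral_nonneg fun p => by positivity) (integral_nonneg fun p => by positivity)
    (box_CS c0 (by fun_prop) R L) (lady h hk0.le hb1 fun x hx => (hb2 x hx).1)
    ?_ ?_ ?_ hM m0 m1 m2 m3 hk ha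
  · nlinarith
  · have cs := box_CS (f := fun p => exp (k * p.1 / 2) * |w p|)
      (g := fun p => exp (k * p.1 / 2) * (k * |w p| + 2 * |pd 1 0 w p|))
      (by fun_prop) (by fun_prop) R L
    have e1 : ∀ p : ℝ × ℝ, (exp (k * p.1 / 2) * |w p|) *
        (exp (k * p.1 / 2) * (k * |w p| + 2 * |pd 1 0 w p|)) =
        exp (k * p.1) * (k * w p ^ 2 + 2 * (|w p| * |pd 1 0 w p|)) := by
      intro p; rw [← hexp, ← sq_abs (w p)]; ring
    have e2 : ∀ p : ℝ × ℝ, (exp (k * p.1 / 2) * |w p|) ^ 2 = exp (k * p.1) * w p ^ 2 := by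
      intro p; rw [← hexp, ← sq_abs (w p)]; ring
    simp_rw [e1, e2] at cs
    refine cs.trans (mul_le_mul_of_nonneg_left ?_ (integral_nonneg fun p => by positivity))
    rw [← integral_const_mul, ← integral_const_mul, ← integral_add]
    · refine setIntegral_mono (box_int (by fun_prop) R L) (box_int (by fun_prop) R L) fun p => ?_
      simp only
      rw [mul_pow, sq (exp _), hexp, ← sq_abs (w p), ← sq_abs (pd 1 0 w p)]
      have := exp_pos (k * p.1)
      nlinarith [mul_nonneg this.le (sq_nonneg (k * |w p| - 2 * |pd 1 0 w p|))]
    all_goals exact box_int (by fun_prop) R L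
  · have cs := box_CS (f := fun p => exp (k * p.1 / 2) * |w p|)
      (g := fun p => exp (k * p.1 / 2) * (2 * |pdy w p|))
      (by fun_prop) (by fun_prop) R L
    have e1 : ∀ p : ℝ × ℝ, (exp (k * p.1 / 2) * |w p|) *
        (exp (k * p.1 / 2) * (2 * |pdy w p|)) =
        exp (k * p.1) * (2 * (|w p| * |pdy w p|)) := by
      intro p; rw [← hexp]; ring
    have e2 : ∀ p : ℝ × ℝ, (exp (k * p.1 / 2) * |w p|) ^ 2 = exp (k * p.1) * w p ^ 2 := by
      intro p; rw [← hexp, ← sq_abs (w p)]; ring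
    have e3 : ∀ p : ℝ × ℝ, (exp (k * p.1 / 2) * (2 * |pdy w p|)) ^ 2 =
        4 * (exp (k * p.1) * pdy w p ^ 2) := by
      intro p; rw [← hexp, ← sq_abs (pdy w p)]; ring
    simp_rw [e1, e2, e3, integral_const_mul] at cs
    exact cs
  · rw [hd, ← integral_const_mul, box_fub1 (by fun_prop), box_fub1 (by fun_prop)]
    refine setIntegral_mono_on (box_int' (f := fun p => π ^ 2 / L ^ 2 * (exp (k * p.1) * w p ^ 2))
      (by fun_prop) R L).integral_prod_left
      (box_int' (f := fun p => exp (k * p.1) * pdy w p ^ 2) (by fun_prop) R L).integral_prod_left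
      measurableSet_Ioc fun x hx => ?_
    have := steklov hL (fun y => h.dy x y) (by fun_prop) (hb2 x hx.1).1 (hb2 x hx.1).2
    simp only [integral_const_mul]
    have := mul_le_mul_of_nonneg_left this (exp_pos (k * x)).le
    linarith

lemma prod_small {c x y η : ℝ} (hc0 : |c| ≤ 1) (hx : |x| ≤ η) (hy : |y| ≤ η) :
    c * (x * y) ≤ η ^ 2 := by
  refine (le_abs_self _).trans ?_
  rw [abs_mul, abs_mul, sq]
  have h1 : |x| * |y| ≤ η * η := mul_le_mul hx hy (abs_nonneg _) ((abs_nonneg _).trans hx)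
  have h2 : 0 ≤ |x| * |y| := by positivity
  nlinarith

lemma flux_bound {κ R y η : ℝ} {w : ℝ × ℝ → ℝ} (hR : 0 ≤ R) (h0 : 0 ≤ κ) (h1 : κ ≤ 1)
    (hη : 0 ≤ η) (hη1 : η ≤ 1)
    (b0 : |exp (κ * R / 2) * pd 0 0 w (R, y)| ≤ η)
    (b1 : |exp (κ * R / 2) * pd 1 0 w (R, y)| ≤ η)
    (b2 : |exp (κ * R / 2) * pd 2 0 w (R, y)| ≤ η)
    (b3 : |exp (κ * R / 2) * pd 3 0 w (R, y)| ≤ η)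
    (b4 : |exp (κ * R / 2) * pd 4 0 w (R, y)| ≤ η)
    (b5 : |exp (κ * R / 2) * pd 0 1 w (R, y)| ≤ η) :
    flux κ w (R, y) ≤ 100 * η := by
  have hexp : exp (κ * R) = exp (κ * R / 2) * exp (κ * R / 2) := by
    rw [← exp_add]; ring_nf
  have he1 : 1 ≤ exp (κ * R / 2) := one_le_exp (by positivity)
  have e5 : pdy w = pd 0 1 w := rfl
  have e0 : pd 0 0 w = w := rfl
  rw [e0] at b0
  unfold flux
  rw [e5]
  simp only
  rw [hexp]
  generalize pd 1 0 w (R, y) = w1 at *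
  generalize pd 2 0 w (R, y) = w2 at *
  generalize pd 3 0 w (R, y) = w3 at *
  generalize pd 4 0 w (R, y) = w4 at *
  generalize pd 0 1 w (R, y) = w5 at *
  generalize w (R, y) = w0 at *
  generalize exp (κ * R / 2) = e at *
  have hw0 : |w0| ≤ 1 := by
    rw [abs_mul, abs_of_pos (by linarith : 0 < e)] at b0
    nlinarith [abs_nonneg w0]
  have p1 : |(1:ℝ)| ≤ 1 := by norm_num
  have n1 : |(-1:ℝ)| ≤ 1 := by norm_num
  have hp : ∀ n : ℕ, |κ ^ n| ≤ 1 := fun n => by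
    rw [abs_of_nonneg (by positivity)]; exact pow_le_one₀ h0 h1
  have hn : ∀ n : ℕ, |-κ ^ n| ≤ 1 := fun n => by rw [abs_neg]; exact hp n
  have hη2 : η ^ 2 ≤ η := by nlinarith
  have q1 := prod_small n1 b0 b0
  have q2 := prod_small (c := -w0) (by rwa [abs_neg]) b0 b0
  have q3 := prod_small n1 b0 b2
  have q4 := prod_small (hp 1) b0 b1
  have q5 := prod_small p1 b1 b1
  have q6 := prod_small (hn 2) b0 b0
  have q7 := prod_small p1 b5 b5
  have q8 := prod_small p1 b0 b4
  have q9 := prod_small (hn 1) b0 b3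
  have q10 := prod_small n1 b1 b3
  have q11 := prod_small p1 b2 b2
  have q12 := prod_small (hp 1) b1 b2
  have q13 := prod_small (hn 2) b1 b1
  have q14 := prod_small (hp 2) b0 b2
  have q15 := prod_small (hn 3) b0 b1
  have q16 := prod_small (hp 4) b0 b0
  have hs : 0 ≤ η ^ 2 := sq_nonneg _
  linarith

lemma gron {E E' : ℝ → ℝ} {χ ε T : ℝ} (hχ : 0 ≤ χ) (hε : 0 ≤ ε)
    (hd : ∀ t ∈ Icc 0 T, HasDerivAt E (E' t) t)
    (hle : ∀ t ∈ Icc 0 T, E' t ≤ -χ * E t + ε) :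
    ∀ t ∈ Icc 0 T, E t ≤ exp (-χ * t) * E 0 + ε * T * exp (χ * T) := by
  intro t ht
  have hD : ∀ s ∈ Icc 0 T, HasDerivAt (fun s => exp (χ * s) * E s - exp (χ * T) * ε * s)
      (exp (χ * s) * χ * E s + exp (χ * s) * E' s - exp (χ * T) * ε) s := by
    intro s hs
    have de : HasDerivAt (fun s => exp (χ * s)) (exp (χ * s) * χ) s := by
      simpa using ((hasDerivAt_id s).const_mul χ).exp
    simpa using (de.fun_mul (hd s hs)).fun_sub ((hasDerivAt_id s).const_mul (exp (χ * T) * ε))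
  have anti : AntitoneOn (fun s => exp (χ * s) * E s - exp (χ * T) * ε * s) (Icc 0 T) := by
    refine antitoneOn_of_deriv_nonpos (convex_Icc _ _)
      (fun s hs => (hD s hs).continuousAt.continuousWithinAt)
      (fun s hs => (hD s (interior_subset hs)).differentiableAt.differentiableWithinAt) ?_
    intro s hs
    have hs := interior_subset hs
    rw [(hD s hs).deriv]
    have h1 := mul_le_mul_of_nonneg_left (hle s hs) (exp_pos (χ * s)).le
    have h2 : exp (χ * s) * ε ≤ exp (χ * T) * ε := by
      gcongr; exact hs.2
    linarith
  have h0 : (0:ℝ) ∈ Icc 0 T := ⟨le_rfl, ht.1.trans ht.2⟩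
  have := anti h0 ht ht.1
  simp only [mul_zero, exp_zero, one_mul, sub_zero] at this
  have h3 : exp (χ * t) * E t ≤ E 0 + ε * T * exp (χ * T) := by
    have : exp (χ * T) * ε * t ≤ exp (χ * T) * ε * T := by
      gcongr; exact ht.2
    linarith
  have h4 := mul_le_mul_of_nonneg_left h3 (exp_pos (-χ * t)).le
  rw [← mul_assoc, ← exp_add] at h4
  have h5 : -χ * t + χ * t = 0 := by ring
  rw [h5, exp_zero, one_mul, mul_add] at h4
  have h6 : exp (-χ * t) ≤ 1 := by
    apply exp_le_one_iff.2; nlinarith [ht.1]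
  have h7 : 0 ≤ ε * T * exp (χ * T) :=
    mul_nonneg (mul_nonneg hε (ht.1.trans ht.2)) (exp_pos _).le
  nlinarith

lemma box_deriv {u : ℝ → ℝ × ℝ → ℝ} (hu : ContDiff ℝ (⊤ : ℕ∞) (Function.uncurry u))
    (κ R L t : ℝ) :
    HasDerivAt (fun t => ∫ p in box R L, exp (κ * p.1) * u t p ^ 2)
      (∫ p in box R L, 2 * exp (κ * p.1) * u t p * deriv (fun s => u s p) t) t := by
  have hut : ∀ s p, HasDerivAt (fun s => u s p) (fderiv ℝ (Function.uncurry u) (s, p) (1, 0)) s := by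
    intro s p
    have h1 : HasFDerivAt (Function.uncurry u) (fderiv ℝ (Function.uncurry u) (s, p)) (s, p) :=
      (hu.differentiable (by simp) (s, p)).hasFDerivAt
    have h2 : HasDerivAt (fun s : ℝ => (s, p)) ((1 : ℝ), (0 : ℝ × ℝ)) s :=
      (hasDerivAt_id s).prodMk (hasDerivAt_const s p)
    exact h1.comp_hasDerivAt s h2
  have cu : Continuous (fun q : ℝ × ℝ × ℝ => u q.1 q.2) := hu.continuous
  have cd : Continuous (fun q : ℝ × ℝ × ℝ => fderiv ℝ (Function.uncurry u) q (1, 0)) :=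
    (hu.continuous_fderiv (by simp)).clm_apply continuous_const
  have cF : Continuous (fun q : ℝ × ℝ × ℝ => 2 * exp (κ * q.2.1) * u q.1 q.2 *
      fderiv ℝ (Function.uncurry u) q (1, 0)) := by fun_prop
  have hcomp : IsCompact (Icc (t - 1) (t + 1) ×ˢ (Icc (0:ℝ) R ×ˢ Icc (0:ℝ) L)) :=
    isCompact_Icc.prod (isCompact_Icc.prod isCompact_Icc)
  obtain ⟨C, hC⟩ := hcomp.exists_bound_of_continuousOn cF.continuousOn
  have hcs : ∀ s, Continuous (u s) := fun s => by
    have : Continuous (fun p => (fun q : ℝ × ℝ × ℝ => u q.1 q.2) (s, p)) := by fun_prop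
    exact this
  have cFt : Continuous (fun p : ℝ × ℝ => 2 * exp (κ * p.1) * u t p *
      fderiv ℝ (Function.uncurry u) (t, p) (1, 0)) := by
    have : Continuous (fun p : ℝ × ℝ => (fun q : ℝ × ℝ × ℝ => 2 * exp (κ * q.2.1) * u q.1 q.2 *
      fderiv ℝ (Function.uncurry u) q (1, 0)) (t, p)) := by fun_prop
    exact this
  have e : ∀ p, deriv (fun s => u s p) t = fderiv ℝ (Function.uncurry u) (t, p) (1, 0) :=
    fun p => (hut t p).deriv
  simp_rw [e]
  refine (hasDerivAt_integral_of_dominated_loc_of_deriv_le (𝕜 := ℝ) (μ := volume.restrict (box R L))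
    (F := fun t p => exp (κ * p.1) * u t p ^ 2)
    (F' := fun t p => 2 * exp (κ * p.1) * u t p * fderiv ℝ (Function.uncurry u) (t, p) (1, 0))
    (s := Icc (t - 1) (t + 1)) (bound := fun _ => C)
    (Icc_mem_nhds (by linarith) (by linarith)) ?_ ?_ ?_ ?_ ?_ ?_).2
  · refine Eventually.of_forall fun s => ?_
    have := hcs s
    exact Continuous.aestronglyMeasurable (by fun_prop)
  · have := hcs t
    exact box_int (by fun_prop) R L
  · exact cFt.aestronglyMeasurable
  · refine (ae_restrict_iff' (box_meas R L)).2 (ae_of_all _ fun p hp s hs => ?_)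
    exact hC (s, p) ⟨hs, Ioc_subset_Icc_self hp.1, Ioo_subset_Icc_self hp.2⟩
  · exact box_int continuous_const R L
  · refine ae_of_all _ fun p s _ => ?_
    have := ((hut s p).fun_pow 2).const_mul (exp (κ * p.1))
    refine this.congr_deriv ?_
    push_cast
    ring

lemma box_limit {L K B : ℝ} {D : Set (ℝ × ℝ)} (hD : D = Ioi (0:ℝ) ×ˢ Ioo 0 L) {f : ℝ × ℝ → ℝ}
    (hf : IntegrableOn f D)
    (h : ∀ ε > 0, ∃ R₀ : ℝ, ∀ R ≥ R₀, ∫ p in box R L, f p ≤ B + K * ε) :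
    ∫ p in D, f p ≤ B := by
  have hU : ⋃ R : ℝ, box R L = D := by
    rw [hD]
    ext ⟨x, y⟩
    simp only [mem_iUnion, box, mem_prod, mem_Ioc, mem_Ioi]
    constructor
    · rintro ⟨R, h1, h2⟩; exact ⟨h1.1, h2⟩
    · rintro ⟨h1, h2⟩; exact ⟨x, ⟨h1, le_rfl⟩, h2⟩
  have hlim : Tendsto (fun R : ℝ => ∫ p in box R L, f p) atTop (𝓝 (∫ p in D, f p)) := by
    rw [← hU]
    refine tendsto_setIntegral_of_monotone (fun R => box_meas R L) ?_ (by rwa [hU])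
    intro R S hRS
    exact prod_mono (Ioc_subset_Ioc_right hRS) subset_rfl
  have hb : ∀ ε > 0, ∫ p in D, f p ≤ B + K * ε := by
    intro ε hε
    obtain ⟨R₀, hR⟩ := h ε hε
    exact le_of_tendsto hlim ((eventually_ge_atTop R₀).mono hR)
  have hl2 : Tendsto (fun ε : ℝ => B + K * ε) (𝓝[>] 0) (𝓝 B) := by
    have : Tendsto (fun ε : ℝ => B + K * ε) (𝓝 0) (𝓝 (B + K * 0)) :=
      Continuous.tendsto (by fun_prop) _
    rw [mul_zero, add_zero] at this
    exact this.mono_left nhdsWithin_le_nhds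
  exact ge_of_tendsto hl2 (eventually_mem_nhdsWithin.mono fun ε hε => hb ε hε)

end helpers

/-- Lemma 6.2: exponential decay of the `e^{kx}`-weighted `L²` norm of small
regular solutions of the 2D Kawahara equation with transport term (`α = 1`) on
the half-strip `D = (0,∞) × (0,L)`, `L < π`. -/
theorem kawahara_weighted_L2_decay (L k T : ℝ)
    (hL : L ∈ Set.Ioo (0:ℝ) Real.pi) (hT : 0 < T) (hk : 0 < k)
    (δsq a χ : ℝ)
    (hδsq : δsq = (Real.pi ^ 2 - L ^ 2) / (4 * L ^ 2))
    (hksmall : k ^ 2 < min (3 / 5) (4 * δsq / 9))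
    (ha : a = (3 - 5 * k ^ 2) / 2)
    (hχ : χ = k * (δsq + k ^ 4))
    (D : Set (ℝ × ℝ)) (hD : D = Set.Ioi (0:ℝ) ×ˢ Set.Ioo 0 L)
    (u : ℝ → ℝ × ℝ → ℝ)
    (hu : ContDiff ℝ (⊤ : ℕ∞) (Function.uncurry u))
    (heq : ∀ t ∈ Set.Icc (0:ℝ) T, ∀ p ∈ D,
      deriv (fun s => u s p) t + pdx (u t) p + u t p * pdx (u t) p +
        pd 3 0 (u t) p + pd 1 2 (u t) p - pd 5 0 (u t) p = 0)
    (hbc1 : ∀ t ∈ Set.Icc (0:ℝ) T, ∀ y ∈ Set.Ioo (0:ℝ) L,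
      u t (0, y) = 0 ∧ pdx (u t) (0, y) = 0)
    (hbc2 : ∀ t ∈ Set.Icc (0:ℝ) T, ∀ x > (0:ℝ),
      u t (x, 0) = 0 ∧ u t (x, L) = 0)
    (hint : ∀ i j : ℕ, i + j ≤ 5 →
      (∀ t ∈ Set.Icc (0:ℝ) T,
        IntegrableOn (fun p => (Real.exp (k * p.1 / 2) * pd i j (u t) p) ^ 2) D) ∧
      ∃ C : ℝ, ∀ t ∈ Set.Icc (0:ℝ) T,
        (∫ p in D, (Real.exp (k * p.1 / 2) * pd i j (u t) p) ^ 2) ≤ C)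
    (hdec : ∀ i j : ℕ, i + j ≤ 5 →
      ∀ ε > 0, ∃ M : ℝ, ∀ x ≥ M, ∀ y : ℝ, ∀ t ∈ Set.Icc (0:ℝ) T,
        |Real.exp (k * x / 2) * pd i j (u t) (x, y)| ≤ ε)
    (hsmall : (∫ p in D, (u 0 p) ^ 2) ≤
      (9 * δsq / 2) * min (1 / 8) (min (a / 2) (δsq / 4))) :
    ∀ t ∈ Set.Icc (0:ℝ) T,
      (∫ p in D, (u t p) ^ 2) ≤ (∫ p in D, Real.exp (k * p.1) * (u t p) ^ 2) ∧
      (∫ p in D, Real.exp (k * p.1) * (u t p) ^ 2) ≤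
        Real.exp (-χ * t) * ∫ p in D, Real.exp (k * p.1) * (u 0 p) ^ 2 := by
  obtain ⟨hL0, hLπ⟩ := hL
  obtain ⟨hk1, hk2⟩ := lt_min_iff.1 hksmall
  have hkle : k ≤ 1 := by nlinarith
  have hd : 1 + 4 * δsq = π ^ 2 / L ^ 2 := by
    rw [hδsq]; field_simp; ring
  have hd0 : 0 < δsq := by nlinarith [sq_nonneg k]
  have ha2 : 2 * a = 3 - 5 * k ^ 2 := by rw [ha]; ring
  set m := min (1 / 8) (min (a / 2) (δsq / 4)) with hm
  have m1 : m ≤ 1 / 8 := min_le_left _ _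
  have m2 : m ≤ a / 2 := (min_le_right _ _).trans (min_le_left _ _)
  have m3 : m ≤ δsq / 4 := (min_le_right _ _).trans (min_le_right _ _)
  have m0 : 0 ≤ m := le_min (by norm_num) (le_min (by linarith) (by linarith))
  have hsm : ∀ t, Sm (u t) := fun t => by
    have : ContDiff ℝ (⊤ : ℕ∞) (fun p : ℝ × ℝ => Function.uncurry u (t, p)) :=
      hu.comp (contDiff_const.prodMk contDiff_id)
    exact this
  have hsub : ∀ R, box R L ⊆ D := fun R => by
    rw [hD]; exact Set.prod_mono (fun x hx => hx.1) subset_rfl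
  have hDm : MeasurableSet D := by rw [hD]; exact measurableSet_Ioi.prod measurableSet_Ioo
  have hE : ∀ t ∈ Set.Icc (0:ℝ) T, IntegrableOn (fun p => exp (k * p.1) * u t p ^ 2) D := by
    intro t ht
    have := (hint 0 0 (by norm_num)).1 t ht
    refine this.congr_fun (fun p _ => ?_) hDm
    simp only [pd_zero]
    rw [mul_pow, ← exp_nat_mul]
    congr 2
    push_cast; ring
  have hle : ∀ t, ∀ p ∈ D, u t p ^ 2 ≤ exp (k * p.1) * u t p ^ 2 := by
    intro t p hp
    rw [hD] at hp
    have : 1 ≤ exp (k * p.1) := one_le_exp (mul_nonneg hk.le (le_of_lt hp.1))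
    nlinarith [sq_nonneg (u t p)]
  have hM : ∀ t ∈ Set.Icc (0:ℝ) T, IntegrableOn (fun p => u t p ^ 2) D := by
    intro t ht
    refine (hE t ht).mono' ((hsm t).continuous.pow 2).aestronglyMeasurable ?_
    refine (ae_restrict_iff' hDm).2 (ae_of_all _ fun p hp => ?_)
    rw [Real.norm_of_nonneg (sq_nonneg _)]
    exact hle t p hp
  -- the flux at the artificial boundary is small
  have hfl : ∀ ε > 0, ∃ R₀ : ℝ, ∀ R ≥ R₀, ∀ κ, 0 ≤ κ → κ ≤ k → ∀ t ∈ Set.Icc (0:ℝ) T, ∀ y,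
      flux κ (u t) (R, y) ≤ ε := by
    intro ε hε
    have hη : 0 < min 1 (ε / 100) := lt_min one_pos (by linarith)
    obtain ⟨M0, h0⟩ := hdec 0 0 (by norm_num) _ hη
    obtain ⟨M1, h1⟩ := hdec 1 0 (by norm_num) _ hη
    obtain ⟨M2, h2⟩ := hdec 2 0 (by norm_num) _ hη
    obtain ⟨M3, h3⟩ := hdec 3 0 (by norm_num) _ hη
    obtain ⟨M4, h4⟩ := hdec 4 0 (by norm_num) _ hη
    obtain ⟨M5, h5⟩ := hdec 0 1 (by norm_num) _ hη
    refine ⟨max 0 (max M0 (max M1 (max M2 (max M3 (max M4 M5))))), ?_⟩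
    intro R hR κ hκ0 hκ t ht y
    simp only [ge_iff_le, max_le_iff] at hR
    obtain ⟨r, r0, r1, r2, r3, r4, r5⟩ := hR
    have conv : ∀ q : ℝ, |exp (k * R / 2) * q| ≤ min 1 (ε / 100) →
        |exp (κ * R / 2) * q| ≤ min 1 (ε / 100) := by
      intro q hq
      refine le_trans ?_ hq
      rw [abs_mul, abs_mul, abs_of_pos (exp_pos _), abs_of_pos (exp_pos _)]
      gcongr
    have := flux_bound (w := u t) (y := y) r hκ0 (hκ.trans hkle) hη.le (min_le_left _ _)
      (conv _ (h0 R r0 y t ht)) (conv _ (h1 R r1 y t ht)) (conv _ (h2 R r2 y t ht))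
      (conv _ (h3 R r3 y t ht)) (conv _ (h4 R r4 y t ht)) (conv _ (h5 R r5 y t ht))
    have := min_le_right 1 (ε / 100)
    linarith
  -- energy inequality on a box
  have hen : ∀ R κ ε : ℝ, 0 < R → (∀ t ∈ Set.Icc (0:ℝ) T, ∀ y, flux κ (u t) (R, y) ≤ ε) →
      ∀ t ∈ Set.Icc (0:ℝ) T,
      ∫ p in box R L, 2 * exp (κ * p.1) * u t p * deriv (fun s => u s p) t ≤
      (∫ p in box R L, exp (κ * p.1) * ((κ + κ ^ 3 - κ ^ 5) * u t p ^ 2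
      + 2 * κ / 3 * u t p ^ 3 - (3 * κ - 5 * κ ^ 3) * pd 1 0 (u t) p ^ 2
      - κ * pdy (u t) p ^ 2 - 5 * κ * pd 2 0 (u t) p ^ 2)) + L * ε := by
    intro R κ ε hR hε t ht
    exact energy (hsm t) hR hL0 (fun p hp => heq t ht p (hsub R hp)) (hbc1 t ht) (hbc2 t ht)
      (hε t ht)
  -- the mass does not increase
  have hmass : ∀ t ∈ Set.Icc (0:ℝ) T, ∫ p in D, u t p ^ 2 ≤ ∫ p in D, u 0 p ^ 2 := by
    intro t ht
    refine box_limit hD (hM t ht) (K := L * T) fun ε hε => ?_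
    obtain ⟨R₀, hR₀⟩ := hfl ε hε
    refine ⟨max R₀ 1, fun R hR => ?_⟩
    have hRp : 0 < R := lt_of_lt_of_le one_pos ((le_max_right _ _).trans hR)
    have hen' := hen R 0 ε hRp (hR₀ R ((le_max_left _ _).trans hR) 0 le_rfl hk.le)
    have g := gron (χ := 0) (ε := L * ε) le_rfl (by positivity)
      (fun s _ => box_deriv hu 0 R L s) (fun s hs => by
        have := hen' s hs
        simpa using this) t ht
    have e0 : ∫ p in box R L, u 0 p ^ 2 ≤ ∫ p in D, u 0 p ^ 2 :=
      setIntegral_mono_set (hM 0 ⟨le_rfl, hT.le⟩) (ae_of_all _ fun p => sq_nonneg _)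
        (hsub R).eventuallyLE
    simp only [zero_mul, neg_zero, exp_zero, one_mul, mul_one] at g
    linarith
  intro t ht
  refine ⟨setIntegral_mono_on (hM t ht) (hE t ht) hDm (hle t), ?_⟩
  have hχ0 : 0 ≤ χ := by rw [hχ]; positivity
  refine box_limit hD (hE t ht) (K := L * T * exp (χ * T)) fun ε hε => ?_
  obtain ⟨R₀, hR₀⟩ := hfl ε hε
  refine ⟨max R₀ 1, fun R hR => ?_⟩
  have hRp : 0 < R := lt_of_lt_of_le one_pos ((le_max_right _ _).trans hR)
  have hen' := hen R k ε hRp (hR₀ R ((le_max_left _ _).trans hR) k hk.le le_rfl)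
  have g := gron (χ := χ) (ε := L * ε) hχ0 (by positivity)
    (fun s _ => box_deriv hu k R L s) (fun s hs => by
      refine (hen' s hs).trans ?_
      have e0 : ∫ p in box R L, u s p ^ 2 ≤ ∫ p in D, u s p ^ 2 :=
        setIntegral_mono_set (hM s hs) (ae_of_all _ fun p => sq_nonneg _) (hsub R).eventuallyLE
      have := diffineq (k := k) (R := R) (L := L) (a := a) (hsm s) hL0 hk
        (fun y hy => (hbc1 s hs y hy).1) (hbc2 s hs)
        hd (e0.trans ((hmass s hs).trans hsmall)) m0 m1 m2 m3 hk2.le ha2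
      rw [hχ]
      linarith) t ht
  have e0 : ∫ p in box R L, exp (k * p.1) * u 0 p ^ 2 ≤ ∫ p in D, exp (k * p.1) * u 0 p ^ 2 :=
    setIntegral_mono_set (hE 0 ⟨le_rfl, hT.le⟩) (ae_of_all _ fun p => by positivity)
      (hsub R).eventuallyLE
  have := mul_le_mul_of_nonneg_left e0 (exp_pos (-χ * t)).le
  linarith
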